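/- Let S be a finite set of non-identity N-qubit Pauli strings. There exists an N-qubit Pauli string V with V P = -P V for every P ∈ S if and only if there is no odd-cardinality subset {P_{j_1}, …, P_{j_{2K+1}}} ⊆ S whose product P_{j_1} P_{j_2} ⋯ P_{j_{2K+1}} equals c·I for some nonzero complex scalar c. -/

import Mathlib

/-!
Up to phase, the single-qubit Pauli matrices form the group `(ZMod 2)²`, with `I, X, Y, Z`
corresponding to `(0,0), (1,0), (1,1), (0,1)`. Hence an `N`-qubit Pauli string is a vector `enc s` of
`W = (ZMod 2)^(2N)`: multiplying strings adds vectors up to a nonzero phase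
(`exists_list_prod_map_pauliString`), and two strings anticommute when the standard symplectic form
of their vectors is `1` (`pauliString_anticomm_of_sum_sympl`).

If `V` anticommutes with every element of `S`, then it anticommutes with every product of an odd
number of them, and so such a product is not a nonzero scalar.

Conversely, if no odd subset of `S` multiplies to a scalar, then no odd subset of the vectors
`enc s` sums to zero, which says that `(0, 1)` is not in the span of the vectors `(enc s, 1)` in
`W × ZMod 2`. A functional that kills this span but not `(0, 1)` restricts to a functional on `W`
that takes the value `1` at each `enc s`. As the symplectic form is nondegenerate, that functional is
the pairing with the vector of some string `V`.
-/

open Matrix Complex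

/-- The four single-qubit Pauli matrices `I, X, Y, Z`, indexed by `Fin 4`. -/
noncomputable def pauli1 : Fin 4 → Matrix (Fin 2) (Fin 2) ℂ
  | 0 => 1
  | 1 => !![0, 1; 1, 0]
  | 2 => !![0, -Complex.I; Complex.I, 0]
  | 3 => !![1, 0; 0, -1]

/-- The `N`-qubit Pauli string `σ_{s 0} ⊗ ⋯ ⊗ σ_{s (N-1)}`, realized as a matrix indexed by
`Fin N → Fin 2` (entrywise description of the iterated Kronecker product). -/
noncomputable def PauliString (N : ℕ) (s : Fin N → Fin 4) :
    Matrix (Fin N → Fin 2) (Fin N → Fin 2) ℂ :=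
  Matrix.of fun r c => ∏ i, pauli1 (s i) (r i) (c i)

/-- The vector in `(ZMod 2)²` of a single-qubit Pauli label: the exponents of `X` and `Z`. -/
def enc1 : Fin 4 → ZMod 2 × ZMod 2
  | 0 => (0, 0)
  | 1 => (1, 0)
  | 2 => (1, 1)
  | 3 => (0, 1)

lemma enc1_surjective : Function.Surjective enc1 := by decide

/-- The label of the product of two single-qubit Pauli matrices, with the phase dropped. -/
def mulLabel : Fin 4 → Fin 4 → Fin 4 := ![![0, 1, 2, 3], ![1, 0, 3, 2], ![2, 3, 0, 1], ![3, 2, 1, 0]]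

lemma enc1_mulLabel (a b : Fin 4) : enc1 (mulLabel a b) = enc1 a + enc1 b := by
  revert a b; decide

lemma eq_zero_of_enc1 (a : Fin 4) : enc1 a = 0 → a = 0 := by
  revert a; decide

/-- The standard symplectic form on `(ZMod 2)²`. -/
def sympl (p q : ZMod 2 × ZMod 2) : ZMod 2 := p.1 * q.2 + p.2 * q.1

/-- The nontrivial additive character `x ↦ (-1)^x` of `ZMod 2`. -/
def chi (x : ZMod 2) : ℂ := if x = 0 then 1 else -1

lemma chi_add (x y : ZMod 2) : chi (x + y) = chi x * chi y := by
  have h : ∀ z : ZMod 2, z = 0 ∨ z = 1 := by decide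
  have h2 : (1 + 1 : ZMod 2) = 0 := by decide
  rcases h x with rfl | rfl <;> rcases h y with rfl | rfl <;> simp [chi, h2]

lemma chi_sum {ι : Type*} (t : Finset ι) (f : ι → ZMod 2) :
    chi (∑ i ∈ t, f i) = ∏ i ∈ t, chi (f i) := by
  classical
  induction t using Finset.induction_on with
  | empty => simp [chi]
  | insert a t ha ih => rw [Finset.sum_insert ha, Finset.prod_insert ha, chi_add, ih]

lemma pauli1_comm (a b : Fin 4) :
    pauli1 a * pauli1 b = chi (sympl (enc1 a) (enc1 b)) • (pauli1 b * pauli1 a) := by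
  have h2 : (1 + 1 : ZMod 2) = 0 := by decide
  fin_cases a <;> fin_cases b <;>
    simp [pauli1, chi, sympl, enc1, h2, Matrix.one_fin_two]

lemma exists_pauli1_mul (a b : Fin 4) :
    ∃ c : ℂ, c ≠ 0 ∧ pauli1 a * pauli1 b = c • pauli1 (mulLabel a b) := by
  have hI := Complex.I_ne_zero
  fin_cases a <;> fin_cases b <;>
    first
    | (refine ⟨1, one_ne_zero, ?_⟩; simp [pauli1, mulLabel, Matrix.one_fin_two]; done)
    | (refine ⟨Complex.I, hI, ?_⟩; simp [pauli1, mulLabel]; done)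
    | (refine ⟨-Complex.I, neg_ne_zero.2 hI, ?_⟩; simp [pauli1, mulLabel])

lemma pauli1_mul_self (a : Fin 4) : pauli1 a * pauli1 a = 1 := by
  fin_cases a <;> simp [pauli1, Matrix.one_fin_two]

/-- The iterated Kronecker product `A 0 ⊗ ⋯ ⊗ A (N-1)`, in the encoding of `PauliString`. -/
def tensor {N : ℕ} (A : Fin N → Matrix (Fin 2) (Fin 2) ℂ) :
    Matrix (Fin N → Fin 2) (Fin N → Fin 2) ℂ :=
  Matrix.of fun r c => ∏ i, A i (r i) (c i)

lemma pauliString_eq_tensor {N : ℕ} (s : Fin N → Fin 4) :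
    PauliString N s = tensor fun i => pauli1 (s i) := rfl

lemma tensor_mul {N : ℕ} (A B : Fin N → Matrix (Fin 2) (Fin 2) ℂ) :
    tensor A * tensor B = tensor fun i => A i * B i := by
  ext r c
  simp only [tensor, Matrix.mul_apply, Matrix.of_apply, ← Finset.prod_mul_distrib]
  exact (Fintype.prod_sum fun i j => A i (r i) j * B i j (c i)).symm

lemma tensor_smul {N : ℕ} (k : Fin N → ℂ) (A : Fin N → Matrix (Fin 2) (Fin 2) ℂ) :
    (tensor fun i => k i • A i) = (∏ i, k i) • tensor A := by
  ext r c
  simp [tensor, Finset.prod_mul_distrib]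

lemma tensor_one {N : ℕ} : tensor (fun _ : Fin N => (1 : Matrix (Fin 2) (Fin 2) ℂ)) = 1 := by
  ext r c
  simp only [tensor, Matrix.of_apply, Matrix.one_apply, funext_iff]
  rw [Finset.prod_ite_zero]
  simp

lemma pauliString_zero {N : ℕ} : PauliString N (fun _ => 0) = 1 := tensor_one

lemma pauliString_mul_self {N : ℕ} (s : Fin N → Fin 4) :
    PauliString N s * PauliString N s = 1 := by
  simp only [pauliString_eq_tensor, tensor_mul, pauli1_mul_self, tensor_one]

/-- The vector in `(ZMod 2)^(2N)` of a Pauli string. -/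
def enc {N : ℕ} (s : Fin N → Fin 4) : Fin N → ZMod 2 × ZMod 2 := fun i => enc1 (s i)

lemma pauliString_anticomm_of_sum_sympl {N : ℕ} (v s : Fin N → Fin 4)
    (h : ∑ i, sympl (enc v i) (enc s i) = 1) :
    PauliString N v * PauliString N s = -(PauliString N s * PauliString N v) := by
  simp only [pauliString_eq_tensor, tensor_mul]
  simp_rw [fun i => pauli1_comm (v i) (s i)]
  rw [tensor_smul, ← chi_sum]
  simp only [enc] at h
  rw [h]
  simp [chi]

lemma exists_pauliString_mul {N : ℕ} (s t : Fin N → Fin 4) :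
    ∃ c : ℂ, c ≠ 0 ∧ PauliString N s * PauliString N t =
      c • PauliString N (fun i => mulLabel (s i) (t i)) := by
  choose k hk hk' using fun i => exists_pauli1_mul (s i) (t i)
  refine ⟨∏ i, k i, Finset.prod_ne_zero_iff.2 fun i _ => hk i, ?_⟩
  simp only [pauliString_eq_tensor, tensor_mul, hk', tensor_smul]

/-- Up to a nonzero phase, a product of Pauli strings is the Pauli string whose vector is the sum of
the vectors of the factors. -/
lemma exists_list_prod_map_pauliString {N : ℕ} (l : List (Fin N → Fin 4)) :
    ∃ c : ℂ, c ≠ 0 ∧ ∃ u : Fin N → Fin 4, enc u = (l.map enc).sum ∧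
      (l.map (PauliString N)).prod = c • PauliString N u := by
  induction l with
  | nil => exact ⟨1, one_ne_zero, fun _ => 0, rfl, by simp [pauliString_zero]⟩
  | cons s l ih =>
    obtain ⟨c, hc, u, hu, h⟩ := ih
    obtain ⟨d, hd, h'⟩ := exists_pauliString_mul s u
    refine ⟨c * d, mul_ne_zero hc hd, fun i => mulLabel (s i) (u i), ?_, ?_⟩
    · rw [List.map_cons, List.sum_cons, ← hu]
      funext i
      exact enc1_mulLabel _ _
    · rw [List.map_cons, List.prod_cons, h, Matrix.mul_smul, h', smul_smul]

lemma list_prod_eq_smul_one {N : ℕ} (l : List (Fin N → Fin 4)) (h : (l.map enc).sum = 0) :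
    ∃ c : ℂ, c ≠ 0 ∧ (l.map (PauliString N)).prod = c • 1 := by
  obtain ⟨c, hc, u, hu, hl⟩ := exists_list_prod_map_pauliString l
  have hu0 : u = fun _ => 0 :=
    funext fun i => eq_zero_of_enc1 _ (congrFun (hu.trans h) i)
  exact ⟨c, hc, by rw [hl, hu0, pauliString_zero]⟩

lemma mul_list_prod_of_anticomm {R : Type*} [Ring R] (V : R) (l : List R)
    (h : ∀ P ∈ l, V * P = -(P * V)) : V * l.prod = (-1) ^ l.length * (l.prod * V) := by
  induction l with
  | nil => simp
  | cons P l ih =>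
    have ih := ih fun Q hQ => h Q (List.mem_cons_of_mem _ hQ)
    have hc : P * (-1) ^ l.length = (-1) ^ l.length * P :=
      ((Commute.one_right P).neg_right.pow_right _).eq
    rw [List.prod_cons, ← mul_assoc, h P List.mem_cons_self, neg_mul, mul_assoc, ih,
      ← mul_assoc P, hc, List.length_cons, pow_succ]
    noncomm_ring

/-- Nondegeneracy of the symplectic form: every functional is the pairing with a Pauli string. -/
lemma exists_sum_sympl_eq {N : ℕ} (f : (Fin N → ZMod 2 × ZMod 2) →ₗ[ZMod 2] ZMod 2) :
    ∃ v : Fin N → Fin 4, ∀ w, ∑ i, sympl (enc v i) (w i) = f w := by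
  choose v hv using fun i : Fin N => enc1_surjective (f (Pi.single i (0, 1)), f (Pi.single i (1, 0)))
  refine ⟨v, fun w => ?_⟩
  have hw : w = ∑ i, ((w i).1 • (Pi.single i (1, 0) : Fin N → ZMod 2 × ZMod 2) +
      (w i).2 • (Pi.single i (0, 1) : Fin N → ZMod 2 × ZMod 2)) := by
    conv_lhs => rw [← Finset.univ_sum_single w]
    refine Finset.sum_congr rfl fun i _ => ?_
    rw [← Pi.single_smul, ← Pi.single_smul, ← Pi.single_add]
    simp
  conv_rhs => rw [hw]
  simp only [map_sum, map_add, map_smul, smul_eq_mul]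
  refine Finset.sum_congr rfl fun i _ => ?_
  simp only [enc, hv, sympl]
  ring

/-- An affine solvability criterion over `ZMod 2`: if no subset of `S` of odd cardinality has
`g`-values summing to zero, then some functional equals `1` on all of `g '' S`. -/
lemma exists_functional_eq_one {α W : Type*} [AddCommGroup W] [Module (ZMod 2) W]
    (S : Finset α) (g : α → W) (h : ∀ T ⊆ S, Odd T.card → ∑ s ∈ T, g s ≠ 0) :
    ∃ f : W →ₗ[ZMod 2] ZMod 2, ∀ s ∈ S, f (g s) = 1 := by
  classical
  have hz : ∀ z : ZMod 2, z = 0 ∨ z = 1 := by decide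
  have hmem : ((0, 1) : W × ZMod 2) ∉
      Submodule.span (ZMod 2) ((fun s => (g s, (1 : ZMod 2))) '' (S : Set α)) := by
    rw [Submodule.mem_span_image_finset_iff_exists_fun']
    rintro ⟨c, hc⟩
    -- Over `ZMod 2`, a linear combination is the sum over the set where the coefficient is `1`; the
    -- second coordinate then records the parity of the size of that set.
    have hsum : ∑ s ∈ S with c s = 1, (g s, (1 : ZMod 2)) = (0, 1) := by
      rw [← hc, Finset.sum_filter]
      refine Finset.sum_congr rfl fun s _ => ?_
      rcases hz (c s) with h0 | h0 <;> simp [h0]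
    have h1 := congrArg Prod.fst hsum
    have h2 := congrArg Prod.snd hsum
    rw [Prod.fst_sum] at h1
    rw [Prod.snd_sum] at h2
    refine h _ (Finset.filter_subset _ S) ?_ h1
    rw [← ZMod.natCast_eq_one_iff_odd]
    simpa using h2
  obtain ⟨φ, hφ, hφ0⟩ := Submodule.exists_dual_map_eq_bot_of_notMem hmem inferInstance
  have hφ1 : φ (0, 1) = 1 := (hz _).resolve_left hφ
  refine ⟨φ ∘ₗ LinearMap.inl (ZMod 2) W (ZMod 2), fun s hs => ?_⟩
  have hs0 : φ (g s, 1) = 0 := by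
    rw [← Submodule.mem_bot (ZMod 2), ← hφ0]
    exact Submodule.mem_map_of_mem (Submodule.subset_span ⟨s, hs, rfl⟩)
  have hsplit : ((g s, 1) : W × ZMod 2) = (g s, 0) + (0, 1) := by simp
  rw [hsplit, map_add, hφ1] at hs0
  have key : ∀ z : ZMod 2, z + 1 = 0 → z = 1 := by decide
  exact key _ hs0

/-- **Condition for single-query inverse.** For a finite set `S` of non-identity Pauli
strings, a Pauli string anticommuting with every element of `S` exists iff no odd-length
list of distinct elements of `S` has product equal to a nonzero scalar multiple of the
identity. -/
theorem exists_anticommuting_pauli_iff {N : ℕ} (S : Finset (Fin N → Fin 4))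
    (hS : ∀ s ∈ S, s ≠ (fun _ => 0)) :
    (∃ v : Fin N → Fin 4, ∀ s ∈ S,
        PauliString N v * PauliString N s = -(PauliString N s * PauliString N v)) ↔
      ¬ ∃ l : List (Fin N → Fin 4), l.Nodup ∧ (∀ s ∈ l, s ∈ S) ∧ Odd l.length ∧
          ∃ c : ℂ, c ≠ 0 ∧ (l.map (PauliString N)).prod
            = c • (1 : Matrix (Fin N → Fin 2) (Fin N → Fin 2) ℂ) := by
  constructor
  · rintro ⟨v, hv⟩ ⟨l, -, hlS, hodd, c, hc, hl⟩
    have h := mul_list_prod_of_anticomm (PauliString N v) (l.map (PauliString N)) (by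
      intro P hP
      obtain ⟨s, hs, rfl⟩ := List.mem_map.1 hP
      exact hv s (hlS s hs))
    rw [hl, List.length_map, hodd.neg_one_pow, Matrix.mul_smul, Matrix.smul_mul, mul_one, one_mul,
      neg_one_mul, eq_neg_iff_add_eq_zero, ← add_smul, smul_eq_zero] at h
    have hV := h.resolve_left (by simpa [← two_mul] using hc)
    have h1 := pauliString_mul_self v
    rw [hV, mul_zero] at h1
    exact zero_ne_one h1
  · intro h
    obtain ⟨f, hf⟩ := exists_functional_eq_one S enc (by
      intro T hT hodd hsum
      refine h ⟨T.toList, T.nodup_toList, fun s hs => hT (Finset.mem_toList.1 hs), ?_, ?_⟩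
      · rwa [Finset.length_toList]
      · exact list_prod_eq_smul_one _ (by rwa [Finset.sum_map_toList]))
    obtain ⟨v, hv⟩ := exists_sum_sympl_eq f
    exact ⟨v, fun s hs => pauliString_anticomm_of_sum_sympl v s ((hv _).trans (hf s hs))⟩
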